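/- With weights w_n = ((n−1)!)^α where 1/α = K is a positive integer and 0 < α < 1, the number X_{K+1,N} of vertices of degree K+1 in T_N converges in distribution to Poisson((K!)^α) as N → ∞. -/

import Mathlib

open Filter

/-- Rooted planar trees (the tree hanging from the vertex `s` next to the root `r`;
the full tree of the paper with `N` edges corresponds to a `PTree` with `N` vertices,
plus the extra root `r` of degree 1 attached to the root `s` of the `PTree`). -/
inductive PTree : Type where
  | node : List PTree → PTree

namespace PTree

/-- The (ordered) subtrees attached to the root. -/
def children : PTree → List PTree
  | node ts => ts

/-- Number of vertices of the `PTree`, i.e. the number `N` of edges of the paper's tree. -/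
def size : PTree → ℕ
  | node ts => 1 + (ts.attach.map (fun t => size t.1)).sum
decreasing_by simp [PTree.node.sizeOf_spec]; have := List.sizeOf_lt_of_mem t.2; omega

/-- The weight `∏_{v ≠ r} w_{σ(v)}`: every vertex `v ≠ r` has degree `outdeg(v) + 1`. -/
noncomputable def weight (w : ℕ → ℝ) : PTree → ℝ
  | node ts => w (ts.length + 1) * (ts.attach.map (fun t => weight w t.1)).prod
decreasing_by simp [PTree.node.sizeOf_spec]; have := List.sizeOf_lt_of_mem t.2; omega

/-- The number of vertices of outdegree `k`, i.e. the number `X_{k+1}` of vertices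
(other than `r`) of degree `k+1`. -/
def countOutdeg (k : ℕ) : PTree → ℕ
  | node ts => (if ts.length = k then 1 else 0) + (ts.attach.map (fun t => countOutdeg k t.1)).sum
decreasing_by simp [PTree.node.sizeOf_spec]; have := List.sizeOf_lt_of_mem t.2; omega

/-- The maximal outdegree of a vertex of the tree. -/
def maxOutdeg : PTree → ℕ
  | node ts => max ts.length ((ts.attach.map (fun t => maxOutdeg t.1)).foldr max 0)
decreasing_by simp [PTree.node.sizeOf_spec]; have := List.sizeOf_lt_of_mem t.2; omega

/-- Outdegree of the first (leftmost) child `s₁` of `s` (0 if there is none). -/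
def firstChildOutdeg : PTree → ℕ
  | node [] => 0
  | node (t :: _) => t.children.length

end PTree

/-- The partition function `Z_N = Σ_{τ ∈ Γ_N} ∏_{v ∈ V(τ)∖{r}} w_{σ(v)}`. -/
noncomputable def Zfun (w : ℕ → ℝ) (N : ℕ) : ℝ :=
  ∑' t : {t : PTree // t.size = N}, t.1.weight w

/-- `ν_N(P)`: probability of the event `P` under the simply generated measure `ν_N`. -/
noncomputable def nu (w : ℕ → ℝ) (N : ℕ) (P : PTree → Prop) : ℝ :=
  (∑' t : {t : PTree // t.size = N ∧ P t}, t.1.weight w) / Zfun w N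

/-!
By the cycle lemma, the outdegrees of the random tree are those of a random allocation of `n` balls
to `n + 1` boxes in which `d` has weight `∏ i, (d i)! ^ α`. Moving the balls of any box into a
fullest one gains a binomial coefficient, which forces all but `o(n)` balls into one giant box; so
about `n` boxes are empty. Moving `K` balls from the giant box into one of these empty boxes
multiplies the weight by about `(K! / n ^ K) ^ α = (K!) ^ α / n`. Hence, with `c = (K!) ^ α`, the
number `X` of boxes with exactly `K` balls satisfies `E[X f(X)] ≈ c E[f(X + 1)]`, and this
identity characterises the Poisson distribution of mean `c`.
-/

open Finset
open scoped Nat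

/-! ### Outdegrees of planar trees -/

namespace PTree

lemma size_node (ts : List PTree) : size (node ts) = 1 + (ts.map size).sum := by
  simp [size]

lemma weight_node (w : ℕ → ℝ) (ts : List PTree) :
    weight w (node ts) = w (ts.length + 1) * (ts.map (weight w)).prod := by
  simp [weight]

lemma countOutdeg_node (k : ℕ) (ts : List PTree) :
    countOutdeg k (node ts) =
      (if ts.length = k then 1 else 0) + (ts.map (countOutdeg k)).sum := by
  simp [countOutdeg]

/-- The multiset of the outdegrees of all vertices of a tree. Size, weight and degree counts
depend on the tree only through it. -/
def outdegs : PTree → Multiset ℕ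
  | node ts => ts.length ::ₘ (ts.attach.map fun t => outdegs t.1).sum
decreasing_by simp [PTree.node.sizeOf_spec]; have := List.sizeOf_lt_of_mem t.2; omega

/-- The multiset of the outdegrees of all vertices of an ordered forest. -/
def forestOutdegs (ts : List PTree) : Multiset ℕ := (ts.map outdegs).sum

lemma outdegs_node (ts : List PTree) : outdegs (node ts) = ts.length ::ₘ forestOutdegs ts := by
  simp [outdegs, forestOutdegs]

lemma forestOutdegs_nil : forestOutdegs [] = 0 := rfl

lemma forestOutdegs_cons (t : PTree) (ts : List PTree) :
    forestOutdegs (t :: ts) = outdegs t + forestOutdegs ts := by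
  simp [forestOutdegs]

lemma forestOutdegs_singleton (t : PTree) : forestOutdegs [t] = outdegs t := by
  simp [forestOutdegs]

lemma forestOutdegs_node_cons (cs ts : List PTree) :
    forestOutdegs (node cs :: ts) = cs.length ::ₘ forestOutdegs (cs ++ ts) := by
  simp [outdegs_node, forestOutdegs]

lemma card_outdegs (t : PTree) : t.outdegs.card = t.size :=
  PTree.rec (motive_1 := fun t => t.outdegs.card = t.size)
    (motive_2 := fun ts => (forestOutdegs ts).card = (ts.map size).sum)
    (fun ts ih => by simp [outdegs_node, size_node, ih, add_comm])
    rfl (fun t ts iht ihts => by simp [forestOutdegs_cons, iht, ihts]) t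

lemma count_outdegs (k : ℕ) (t : PTree) : t.outdegs.count k = t.countOutdeg k :=
  PTree.rec (motive_1 := fun t => t.outdegs.count k = t.countOutdeg k)
    (motive_2 := fun ts => (forestOutdegs ts).count k = (ts.map (countOutdeg k)).sum)
    (fun ts ih => by
      simp [outdegs_node, countOutdeg_node, Multiset.count_cons, ih, add_comm, eq_comm])
    (by simp [forestOutdegs_nil])
    (fun t ts iht ihts => by simp [forestOutdegs_cons, iht, ihts]) t

lemma prod_map_outdegs (w : ℕ → ℝ) (t : PTree) :
    (t.outdegs.map fun k => w (k + 1)).prod = t.weight w :=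
  PTree.rec (motive_1 := fun t => (t.outdegs.map fun k => w (k + 1)).prod = t.weight w)
    (motive_2 := fun ts =>
      ((forestOutdegs ts).map fun k => w (k + 1)).prod = (ts.map (weight w)).prod)
    (fun ts ih => by simp [outdegs_node, weight_node, ih])
    (by simp [forestOutdegs_nil])
    (fun t ts iht ihts => by simp [forestOutdegs_cons, iht, ihts]) t

lemma length_le_card_forestOutdegs (ts : List PTree) :
    ts.length ≤ (forestOutdegs ts).card := by
  induction ts with
  | nil => simp
  | cons t ts ih =>
    obtain ⟨cs⟩ := t
    simp only [List.length_cons, forestOutdegs_cons, outdegs_node, Multiset.card_add,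
      Multiset.card_cons]
    omega

open Classical in
/-- The ordered forests of `k` trees with `n` vertices in total, generated by removing the root
of the first tree. -/
noncomputable def forests : ℕ → ℕ → Finset (List PTree)
  | 0, 0 => {[]}
  | 0, _ + 1 => ∅
  | _ + 1, 0 => ∅
  | n + 1, k + 1 => (range (n - k + 1)).biUnion fun d =>
      (forests n (k + d)).image fun ts => node (ts.take d) :: ts.drop d

lemma mem_forests {n k : ℕ} {ts : List PTree} :
    ts ∈ forests n k ↔ (forestOutdegs ts).card = n ∧ ts.length = k := by
  induction n generalizing k ts with
  | zero =>
    have hlen := length_le_card_forestOutdegs ts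
    cases k with
    | zero =>
      simp only [forests, mem_singleton, List.length_eq_zero_iff]
      exact ⟨by rintro rfl; simp [forestOutdegs_nil], And.right⟩
    | succ k =>
      simp only [forests, notMem_empty, false_iff]
      omega
  | succ n ih =>
    cases k with
    | zero =>
      simp only [forests, notMem_empty, false_iff, List.length_eq_zero_iff]
      rintro ⟨h, rfl⟩
      simp [forestOutdegs_nil] at h
    | succ k =>
      simp only [forests, mem_biUnion, mem_range, mem_image, ih]
      constructor
      · rintro ⟨d, -, ts, ⟨hn, hk⟩, rfl⟩
        simp [forestOutdegs_node_cons, hn, hk]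
      · rintro ⟨hn, hk⟩
        match ts with
        | [] => simp at hk
        | node cs :: ts =>
          have hlen := length_le_card_forestOutdegs (cs ++ ts)
          simp only [forestOutdegs_node_cons, Multiset.card_cons, List.length_cons,
            List.length_append] at hn hk hlen
          exact ⟨cs.length, by omega, cs ++ ts,
            ⟨by omega, by simp only [List.length_append]; omega⟩, by simp⟩

lemma sum_forests_succ {M : Type*} [AddCommMonoid M] (n k : ℕ) (F : Multiset ℕ → M) :
    ∑ ts ∈ forests (n + 1) (k + 1), F (forestOutdegs ts) =
      ∑ d ∈ range (n - k + 1), ∑ ts ∈ forests n (k + d), F (d ::ₘ forestOutdegs ts) := by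
  classical
  rw [forests, sum_biUnion]
  · refine sum_congr rfl fun d _ => ?_
    rw [sum_image]
    · refine sum_congr rfl fun ts hts => ?_
      rw [forestOutdegs_node_cons, List.take_append_drop, List.length_take,
        min_eq_left (by have := (mem_forests.1 hts).2; omega)]
    · intro ts _ ts' _ h
      simp only [List.cons.injEq, node.injEq] at h
      rw [← List.take_append_drop d ts, h.1, h.2, List.take_append_drop]
  · intro d _ d' _ hne
    simp only [Function.onFun, disjoint_left, mem_image, mem_forests]
    rintro _ ⟨ts, ⟨-, hts⟩, rfl⟩ ⟨ts', ⟨-, hts'⟩, h⟩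
    simp only [List.cons.injEq, node.injEq] at h
    have hlen := congrArg List.length h.1
    simp only [List.length_take] at hlen
    omega

end PTree

lemma mem_piAntidiag_univ {ι : Type*} [Fintype ι] [DecidableEq ι] {n : ℕ} {d : ι → ℕ} :
    d ∈ piAntidiag univ n ↔ ∑ i, d i = n := by
  simp

lemma sum_piAntidiag_fin_succ {M : Type*} [AddCommMonoid M] (n s : ℕ)
    (H : (Fin (n + 1) → ℕ) → M) :
    ∑ e ∈ piAntidiag univ s, H e =
      ∑ d ∈ range (s + 1), ∑ e ∈ piAntidiag univ (s - d), H (Fin.cons d e) := by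
  rw [sum_sigma']
  refine sum_bij' (fun e _ => ⟨e 0, Fin.tail e⟩) (fun p _ => Fin.cons p.1 p.2) ?_ ?_ ?_ ?_ ?_
  · intro e he
    simp only [mem_piAntidiag_univ, Fin.sum_univ_succ] at he
    simp only [mem_sigma, mem_range, mem_piAntidiag_univ, Fin.tail_def]
    omega
  · rintro ⟨d, e⟩ h
    simp only [mem_sigma, mem_range, mem_piAntidiag_univ] at h
    simp only [mem_piAntidiag_univ, Fin.sum_univ_succ, Fin.cons_zero, Fin.cons_succ]
    omega
  · intro e _
    simp
  · rintro ⟨d, e⟩ _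
    simp
  · intro e _
    simp

lemma card_mul_sum_piAntidiag_apply {R ι : Type*} [CommSemiring R] [Fintype ι] [DecidableEq ι]
    (s : ℕ) (F : Multiset ℕ → R) (i : ι) :
    (Fintype.card ι : R) * ∑ e ∈ piAntidiag univ s, (e i : R) * F (univ.val.map e) =
      s * ∑ e ∈ piAntidiag (univ : Finset ι) s, F (univ.val.map e) := by
  have map_comp_perm (e : ι → ℕ) (σ : Equiv.Perm ι) :
      (univ : Finset ι).val.map (e ∘ σ) = (univ : Finset ι).val.map e := by
    rw [← Multiset.map_map]
    simp
  have sum_apply_eq (j : ι) :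
      ∑ e ∈ piAntidiag univ s, (e j : R) * F (univ.val.map e) =
        ∑ e ∈ piAntidiag univ s, (e i : R) * F (univ.val.map e) := by
    have mem_swap (e : ι → ℕ) (he : e ∈ piAntidiag univ s) :
        e ∘ Equiv.swap i j ∈ piAntidiag univ s := by
      rw [mem_piAntidiag_univ] at he ⊢
      exact (Equiv.sum_comp (Equiv.swap i j) e).trans he
    refine sum_bij' (fun e _ => e ∘ Equiv.swap i j) (fun e _ => e ∘ Equiv.swap i j)
      mem_swap mem_swap ?_ ?_ ?_
    · intro e _; ext; simp
    · intro e _; ext; simp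
    · intro e _
      rw [map_comp_perm]
      simp
  calc (Fintype.card ι : R) * ∑ e ∈ piAntidiag univ s, (e i : R) * F (univ.val.map e)
      = ∑ j : ι, ∑ e ∈ piAntidiag univ s, (e j : R) * F (univ.val.map e) := by
        simp [sum_apply_eq]
    _ = ∑ e ∈ piAntidiag univ s, (∑ j : ι, (e j : R)) * F (univ.val.map e) := by
        rw [sum_comm]
        simp only [sum_mul]
    _ = s * ∑ e ∈ piAntidiag (univ : Finset ι) s, F (univ.val.map e) := by
        rw [mul_sum]
        refine sum_congr rfl fun e he => ?_
        rw [← Nat.cast_sum, mem_piAntidiag_univ.1 he]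

namespace PTree

-- Cycle lemma. Removing the first root, which has `d` children, turns `k + 1` trees into `k + d`
-- trees, so induction weighs an outdegree sequence starting with `d` by `k + d`; by symmetry `d`
-- contributes its average `s / (k + 1 + s)`.
theorem card_mul_sum_forests {R : Type*} [Field R] [CharZero R] (k s : ℕ)
    (F : Multiset ℕ → R) :
    ((k + s : ℕ) : R) * ∑ ts ∈ forests (k + s) k, F (forestOutdegs ts) =
      k * ∑ e ∈ piAntidiag (univ : Finset (Fin (k + s))) s, F (univ.val.map e) := by
  induction hn : k + s generalizing k s F with
  | zero => simp [show k = 0 by omega]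
  | succ n ih =>
    cases k with
    | zero => simp [forests]
    | succ k =>
      rw [sum_forests_succ, show n - k = s by omega]
      rcases Nat.eq_zero_or_pos n with rfl | hpos
      · obtain ⟨rfl, rfl⟩ : k = 0 ∧ s = 0 := by omega
        simp [forests, forestOutdegs_nil]
      set A := ∑ e ∈ piAntidiag (univ : Finset (Fin (n + 1))) s, (e 0 : R) * F (univ.val.map e)
        with hA
      set B := ∑ e ∈ piAntidiag (univ : Finset (Fin (n + 1))) s, F (univ.val.map e) with hB
      have first_root : (n : R) * ∑ d ∈ range (s + 1), ∑ ts ∈ forests n (k + d),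
          F (d ::ₘ forestOutdegs ts) = k * B + A := by
        rw [hA, hB, mul_sum, mul_sum, ← sum_add_distrib, sum_piAntidiag_fin_succ]
        refine sum_congr rfl fun d hd => ?_
        have hd : d ≤ s := Nat.lt_succ_iff.1 (mem_range.1 hd)
        rw [ih (k + d) (s - d) (fun M => F (d ::ₘ M)) (by omega), mul_sum]
        refine sum_congr rfl fun e _ => ?_
        simp [Fin.univ_succ]
        ring
      have symmetry : (n + 1 : R) * A = s * B := by
        rw [← card_mul_sum_piAntidiag_apply s F 0, Fintype.card_fin, Nat.cast_succ]
      have hns : (n : R) = k + s := by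
        exact_mod_cast (show n = k + s by omega)
      apply mul_left_cancel₀ (Nat.cast_ne_zero.2 hpos.ne' : (n : R) ≠ 0)
      push_cast
      linear_combination (n + 1 : R) * first_root + symmetry - B * hns

/-- The trees with `n` vertices. -/
noncomputable def trees (n : ℕ) : Finset PTree :=
  (forests n 1).preimage (fun t => [t]) (List.singleton_injective.injOn)

lemma mem_trees {n : ℕ} {t : PTree} : t ∈ trees n ↔ t.size = n := by
  simp [trees, mem_forests, forestOutdegs_singleton, card_outdegs]

theorem succ_mul_sum_trees {R : Type*} [Field R] [CharZero R] (n : ℕ) (F : Multiset ℕ → R) :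
    (n + 1 : R) * ∑ t ∈ trees (n + 1), F t.outdegs =
      ∑ d ∈ piAntidiag (univ : Finset (Fin (n + 1))) n, F (univ.val.map d) := by
  have sum_trees : ∑ t ∈ trees (n + 1), F t.outdegs =
      ∑ ts ∈ forests (n + 1) 1, F (forestOutdegs ts) := by
    simp only [← forestOutdegs_singleton]
    refine sum_preimage _ _ _ (fun ts => F (forestOutdegs ts)) fun ts hts hnot => ?_
    obtain ⟨t, rfl⟩ := List.length_eq_one_iff.1 (mem_forests.1 hts).2
    exact absurd ⟨t, rfl⟩ hnot
  have h := card_mul_sum_forests 1 n F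
  rw [add_comm 1 n] at h
  rw [sum_trees]
  simpa using h

lemma tsum_size_eq_and (n : ℕ) (P : PTree → Prop) [DecidablePred P] (f : PTree → ℝ) :
    ∑' t : {t : PTree // t.size = n ∧ P t}, f t = ∑ t ∈ trees n with P t, f t := by
  rw [← Finset.tsum_subtype]
  exact Equiv.tsum_eq (Equiv.subtypeEquivRight fun t => by simp [mem_trees])
    fun t : {t // t ∈ (trees n).filter P} => f t

lemma tsum_size_eq (n : ℕ) (f : PTree → ℝ) :
    ∑' t : {t : PTree // t.size = n}, f t = ∑ t ∈ trees n, f t := by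
  rw [← Finset.tsum_subtype]
  exact Equiv.tsum_eq (Equiv.subtypeEquivRight fun t => by simp [mem_trees])
    fun t : {t // t ∈ trees n} => f t

end PTree

open PTree in
theorem nu_outdegs (w : ℕ → ℝ) (n : ℕ) (Q : Multiset ℕ → Prop) [DecidablePred Q] :
    nu w (n + 1) (fun t => Q t.outdegs) =
      (∑ d ∈ piAntidiag (univ : Finset (Fin (n + 1))) n,
        if Q (univ.val.map d) then ∏ i, w (d i + 1) else 0) /
      ∑ d ∈ piAntidiag (univ : Finset (Fin (n + 1))) n, ∏ i, w (d i + 1) := by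
  have prod_eq (d : Fin (n + 1) → ℕ) :
      ((univ.val.map d).map fun k => w (k + 1)).prod = ∏ i, w (d i + 1) := by
    rw [Multiset.map_map]
    rfl
  have sum_weight := succ_mul_sum_trees n fun M => (M.map fun k => w (k + 1)).prod
  have sum_weight_of := succ_mul_sum_trees n
    fun M => if Q M then (M.map fun k => w (k + 1)).prod else 0
  simp only [prod_map_outdegs, prod_eq] at sum_weight sum_weight_of
  rw [← sum_weight, ← sum_weight_of, ← sum_filter, nu, Zfun, tsum_size_eq_and, tsum_size_eq,
    mul_div_mul_left _ _ (by positivity)]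

/-! ### The giant box of a random allocation -/

lemma two_pow_le_choose {D k : ℕ} (h : k ≤ D) : 2 ^ k ≤ (D + k).choose k := by
  induction k with
  | zero => simp
  | succ k ih =>
    refine Nat.le_of_mul_le_mul_right ?_ k.succ_pos
    calc 2 ^ (k + 1) * (k + 1) = 2 * (k + 1) * 2 ^ k := by ring
      _ ≤ (D + k + 1) * (D + k).choose k := Nat.mul_le_mul (by omega) (ih (by omega))
      _ = (D + (k + 1)).choose (k + 1) * (k + 1) := Nat.add_one_mul_choose_eq (D + k) k

lemma mul_two_pow_le_choose_sq {D k : ℕ} (hk : 1 ≤ k) (h : k ≤ D) :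
    D * 2 ^ k ≤ (D + k).choose k ^ 2 := by
  have hD : D ≤ (D + k).choose k :=
    calc D ≤ (D + 1).choose D := by simp
      _ ≤ (D + k).choose D := Nat.choose_le_choose D (by omega)
      _ = (D + k).choose k := Nat.choose_symm_add
  rw [sq]
  exact Nat.mul_le_mul hD (two_pow_le_choose h)

lemma inv_choose_rpow_le {α : ℝ} (hα : 0 ≤ α) {L D k : ℕ} (hL : 0 < L) (hLD : L ≤ D) (hk : 1 ≤ k)
    (hkD : k ≤ D) :
    ((D + k).choose k : ℝ)⁻¹ ^ α ≤ (L : ℝ) ^ (-(α / 2)) * ((2 : ℝ) ^ (-(α / 2))) ^ k := by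
  have hle : (L * 2 ^ k : ℝ) ≤ ((D + k).choose k : ℝ) ^ 2 := by
    exact_mod_cast (Nat.mul_le_mul_right _ hLD).trans (mul_two_pow_le_choose_sq hk hkD)
  calc ((D + k).choose k : ℝ)⁻¹ ^ α = (((D + k).choose k : ℝ) ^ 2) ^ (-(α / 2)) := by
        rw [← Real.rpow_natCast_mul (by positivity), Real.inv_rpow (by positivity),
          ← Real.rpow_neg (by positivity)]
        congr 1
        push_cast
        ring
    _ ≤ (L * 2 ^ k : ℝ) ^ (-(α / 2)) :=
        Real.rpow_le_rpow_of_nonpos (by positivity) hle (by linarith)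
    _ = (L : ℝ) ^ (-(α / 2)) * ((2 : ℝ) ^ (-(α / 2))) ^ k := by
        rw [Real.mul_rpow (by positivity) (by positivity), ← Real.rpow_natCast_mul (by positivity),
          ← Real.rpow_mul_natCast (by positivity), mul_comm (k : ℝ)]

section Allocations

section MoveBalls

variable {ι : Type*} [DecidableEq ι] {g i : ι}

/-- The allocation obtained from `d` by moving `k` balls from box `g` to box `i`, where `i` is meant
to be empty and `g` to contain at least `k` balls. -/
def moveBalls (g i : ι) (k : ℕ) (d : ι → ℕ) : ι → ℕ :=
  Function.update (Function.update d i k) g (d g - k)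

lemma lt_of_moveBalls_isMax (hgi : g ≠ i) {k : ℕ} (hk : 0 < k) {d : ι → ℕ} (hi : d i = 0)
    (hkg : k ≤ d g) (hmax : ∀ j, moveBalls g i k d j ≤ moveBalls g i k d g) :
    k ≤ d g - k ∧ ∀ j, j ≠ g → d j < d g := by
  simp only [moveBalls, Function.update_self] at hmax
  have hki : k ≤ d g - k := by simpa [hgi.symm] using hmax i
  refine ⟨hki, fun j hj => ?_⟩
  rcases eq_or_ne j i with rfl | hji
  · omega
  · have hdj : d j ≤ d g - k := by simpa [hj, hji] using hmax j
    omega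

end MoveBalls

variable {ι : Type*} [Fintype ι] {g i : ι} {α : ℝ} {n : ℕ}

/-- The weight `∏ i, (d i)! ^ α` of an allocation `d` of balls to the boxes `ι`. -/
noncomputable def factorialWeight (α : ℝ) (d : ι → ℕ) : ℝ := ∏ i, ((d i)! : ℝ) ^ α

/-- The number of balls in a fullest box. -/
def maxLoad (d : ι → ℕ) : ℕ := univ.sup d

/-- The number of boxes that contain exactly `k` balls. -/
def numBoxes (k : ℕ) (d : ι → ℕ) : ℕ := #{i | d i = k}

lemma factorialWeight_pos (α : ℝ) (d : ι → ℕ) : 0 < factorialWeight α d :=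
  prod_pos fun _ _ => by positivity

lemma factorialWeight_le_of_maxLoad_le (hα : 0 ≤ α) {M : ℕ} {d : ι → ℕ} (hM : maxLoad d ≤ M) :
    factorialWeight α d ≤ ((M : ℝ) ^ ∑ i, d i) ^ α := by
  rw [← prod_pow_eq_pow_sum, ← Real.finsetProd_rpow _ _ fun i _ => by positivity]
  refine prod_le_prod (fun i _ => by positivity) fun i _ => ?_
  gcongr
  exact_mod_cast (Nat.factorial_le_pow _).trans
    (Nat.pow_le_pow_left ((le_sup (mem_univ i)).trans hM) _)

lemma maxLoad_le_sum (d : ι → ℕ) : maxLoad d ≤ ∑ i, d i :=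
  Finset.sup_le fun _ hi => single_le_sum (fun _ _ => Nat.zero_le _) hi

variable [DecidableEq ι]

@[to_additive]
lemma prod_update_update_mul {M : Type*} [CommMonoid M] (hgi : g ≠ i) (d : ι → ℕ) (a b : ℕ)
    (F : ℕ → M) :
    (∏ j, F (Function.update (Function.update d i a) g b j)) * (F (d i) * F (d g)) =
      (∏ j, F (d j)) * (F a * F b) := by
  have hi : i ∈ univ \ {g} := by simp [hgi.symm]
  simp only [← Function.comp_apply (f := F), Function.comp_update, prod_update_of_mem (mem_univ g),
    prod_update_of_mem hi, ← prod_sdiff (subset_univ {g}), ← mul_prod_erase _ _ hi]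
  simp only [prod_singleton, sdiff_singleton_eq_erase]
  ac_rfl

lemma sum_piAntidiag_apply_eq {M : Type*} [AddCommMonoid M] (hgi : g ≠ i) (n k : ℕ)
    (H : (ι → ℕ) → M) :
    ∑ d ∈ piAntidiag univ n with d i = k, H d =
      ∑ d ∈ piAntidiag univ n with d i = 0 ∧ k ≤ d g, H (moveBalls g i k d) := by
  let moveBack (d : ι → ℕ) := Function.update (Function.update d i 0) g (d g + k)
  have move_moveBack {d : ι → ℕ} (hd : d i = k) : moveBalls g i k (moveBack d) = d := by
    ext j
    simp only [moveBalls, moveBack, Function.update_apply]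
    grind
  have moveBack_move {d : ι → ℕ} (hi : d i = 0) (hg : k ≤ d g) :
      moveBack (moveBalls g i k d) = d := by
    ext j
    simp only [moveBalls, moveBack, Function.update_apply]
    grind
  refine sum_bij' (fun d _ => moveBack d) (fun d _ => moveBalls g i k d) ?_ ?_
    (fun d hd => move_moveBack (mem_filter.1 hd).2)
    (fun d hd => moveBack_move (mem_filter.1 hd).2.1 (mem_filter.1 hd).2.2)
    (fun d hd => by rw [move_moveBack (mem_filter.1 hd).2])
  · intro d hd
    have h := sum_update_update_add hgi d 0 (d g + k) id
    simp only [mem_filter, mem_piAntidiag_univ, id, moveBack] at hd h ⊢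
    simp only [Function.update_self, Function.update_of_ne hgi.symm, true_and]
    omega
  · intro d hd
    have h := sum_update_update_add hgi d k (d g - k) id
    simp only [mem_filter, mem_piAntidiag_univ, id, moveBalls] at hd h ⊢
    simp only [Function.update_self, Function.update_of_ne hgi.symm, and_true]
    omega

lemma factorialWeight_moveBalls (hgi : g ≠ i) {k : ℕ} {d : ι → ℕ} (hi : d i = 0)
    (hk : k ≤ d g) :
    factorialWeight α (moveBalls g i k d) =
      factorialWeight α d * ((d g).choose k : ℝ)⁻¹ ^ α := by
  have h := prod_update_update_mul hgi d k (d g - k) fun j => (j ! : ℝ) ^ α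
  simp only [hi, Nat.factorial_zero, Nat.cast_one, Real.one_rpow, one_mul] at h
  rw [Nat.cast_choose ℝ hk, inv_div, Real.div_rpow (by positivity) (by positivity),
    Real.mul_rpow (by positivity) (by positivity), ← mul_div_assoc,
    eq_div_iff (by positivity)]
  exact h

variable (ι) in
/-- The expectation over the random allocation of `n` balls to the boxes `ι` that takes the value
`d` with probability proportional to `factorialWeight α d`. -/
noncomputable def boxMean (α : ℝ) (n : ℕ) : ((ι → ℕ) → ℝ) →ₗ[ℝ] ℝ :=
  (∑ d ∈ piAntidiag (univ : Finset ι) n, factorialWeight α d)⁻¹ •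
    ∑ d ∈ piAntidiag univ n, factorialWeight α d • LinearMap.proj d

lemma boxMean_apply (f : (ι → ℕ) → ℝ) :
    boxMean ι α n f = (∑ d ∈ piAntidiag univ n, factorialWeight α d * f d) /
      ∑ d ∈ piAntidiag (univ : Finset ι) n, factorialWeight α d := by
  simp [boxMean, div_eq_inv_mul]

lemma boxMean_mono {f f' : (ι → ℕ) → ℝ} (h : ∀ d, ∑ i, d i = n → f d ≤ f' d) :
    boxMean ι α n f ≤ boxMean ι α n f' := by
  rw [boxMean_apply, boxMean_apply]
  gcongr with d hd
  · exact sum_nonneg fun d _ => (factorialWeight_pos α d).le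
  · exact (factorialWeight_pos α d).le
  · exact h d (mem_piAntidiag_univ.1 hd)

lemma boxMean_congr {f f' : (ι → ℕ) → ℝ} (h : ∀ d, ∑ i, d i = n → f d = f' d) :
    boxMean ι α n f = boxMean ι α n f' :=
  le_antisymm (boxMean_mono fun d hd => (h d hd).le) (boxMean_mono fun d hd => (h d hd).ge)

lemma boxMean_nonneg {f : (ι → ℕ) → ℝ} (h : ∀ d, 0 ≤ f d) : 0 ≤ boxMean ι α n f :=
  (map_zero (boxMean ι α n)).symm.trans_le (boxMean_mono fun d _ => h d)

lemma boxMean_const [Nonempty ι] (c : ℝ) : boxMean ι α n (fun _ => c) = c := by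
  have hne : (piAntidiag (univ : Finset ι) n).Nonempty :=
    ⟨Pi.single (Classical.arbitrary ι) n, by simp⟩
  rw [boxMean_apply, ← sum_mul, mul_div_cancel_left₀]
  exact (sum_pos (fun d _ => factorialWeight_pos α d) hne).ne'

theorem boxMean_apply_eq (hgi : g ≠ i) (k : ℕ) (H : (ι → ℕ) → ℝ) :
    boxMean ι α n (fun d => if d i = k then H d else 0) =
      boxMean ι α n (fun d => if d i = 0 ∧ k ≤ d g then
        ((d g).choose k : ℝ)⁻¹ ^ α * H (moveBalls g i k d) else 0) := by
  simp only [boxMean_apply, mul_ite, mul_zero, ← sum_filter,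
    sum_piAntidiag_apply_eq hgi n k fun d => factorialWeight α d * H d]
  congr 1
  refine sum_congr rfl fun d hd => ?_
  rw [factorialWeight_moveBalls hgi (mem_filter.1 hd).2.1 (mem_filter.1 hd).2.2, mul_assoc]

lemma abs_boxMean_le (f : (ι → ℕ) → ℝ) :
    |boxMean ι α n f| ≤ boxMean ι α n fun d => |f d| := by
  rw [abs_le, ← map_neg]
  exact ⟨boxMean_mono fun d _ => neg_abs_le (f d), boxMean_mono fun d _ => le_abs_self (f d)⟩

-- Putting the `k ≥ 1` balls of box `i` into a fullest box `g` makes `g` the only fullest box, and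
-- the weight gains a binomial coefficient.
lemma boxMean_apply_eq_and_isMax_le (hα : 0 ≤ α) {L k : ℕ} (hL : 0 < L) (hk : 0 < k)
    (hgi : g ≠ i) :
    boxMean ι α n
        (fun d => if d i = k then if L ≤ d g ∧ ∀ j, d j ≤ d g then 1 else 0 else 0) ≤
      (L : ℝ) ^ (-(α / 2)) * ((2 : ℝ) ^ (-(α / 2))) ^ k *
        boxMean ι α n (fun d => if ∀ j, j ≠ g → d j < d g then 1 else 0) := by
  rw [boxMean_apply_eq hgi, ← smul_eq_mul _ (boxMean ι α n _), ← map_smul]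
  refine boxMean_mono fun d _ => ?_
  simp only [Pi.smul_apply, smul_eq_mul]
  by_cases hmove : (d i = 0 ∧ k ≤ d g) ∧
      L ≤ moveBalls g i k d g ∧ ∀ j, moveBalls g i k d j ≤ moveBalls g i k d g
  · obtain ⟨⟨hi, hkg⟩, hLg, hmax⟩ := hmove
    obtain ⟨hki, hlt⟩ := lt_of_moveBalls_isMax hgi hk hi hkg hmax
    rw [if_pos ⟨hi, hkg⟩, if_pos ⟨hLg, hmax⟩, if_pos hlt, mul_one, mul_one]
    have hLD : L ≤ d g - k := by simpa [moveBalls] using hLg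
    simpa [Nat.sub_add_cancel hkg] using inv_choose_rpow_le hα hL hLD hk hki
  · calc _ = (0 : ℝ) := by grind
      _ ≤ _ := by positivity

theorem boxMean_apply_isMax_le (hα : 0 < α) {L : ℕ} (hL : 0 < L) (hgi : g ≠ i) :
    boxMean ι α n (fun d => if L ≤ d g ∧ ∀ j, d j ≤ d g then (d i : ℝ) else 0) ≤
      (L : ℝ) ^ (-(α / 2)) * (∑' k : ℕ, k * ((2 : ℝ) ^ (-(α / 2))) ^ k) *
        boxMean ι α n (fun d => if ∀ j, j ≠ g → d j < d g then 1 else 0) := by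
  set r : ℝ := (2 : ℝ) ^ (-(α / 2))
  have hr : r < 1 := Real.rpow_lt_one_of_one_lt_of_neg one_lt_two (by linarith)
  have summable : Summable fun k : ℕ => k * r ^ k := by
    simpa using summable_pow_mul_geometric_of_norm_lt_one 1 (r := r)
      (by rwa [Real.norm_of_nonneg (by positivity)])
  set P : ℝ := boxMean ι α n fun d => if ∀ j, j ≠ g → d j < d g then 1 else 0
  have hP : 0 ≤ P := boxMean_nonneg fun d => by positivity
  calc boxMean ι α n (fun d => if L ≤ d g ∧ ∀ j, d j ≤ d g then (d i : ℝ) else 0)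
      = ∑ k ∈ range (n + 1), k * boxMean ι α n
          (fun d => if d i = k then if L ≤ d g ∧ ∀ j, d j ≤ d g then 1 else 0 else 0) := by
        simp only [← smul_eq_mul, ← map_smul, ← map_sum]
        refine boxMean_congr fun d hd => ?_
        have hi : d i < n + 1 := by
          rw [← hd, Nat.lt_succ_iff]
          exact single_le_sum (fun _ _ => Nat.zero_le _) (mem_univ i)
        simp [hi]
    _ ≤ ∑ k ∈ range (n + 1), k * (L ^ (-(α / 2)) * r ^ k * P) := by
        refine sum_le_sum fun k _ => ?_
        rcases Nat.eq_zero_or_pos k with rfl | hk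
        · simp
        · gcongr
          exact boxMean_apply_eq_and_isMax_le hα.le hL hk hgi
    _ = L ^ (-(α / 2)) * (∑ k ∈ range (n + 1), k * r ^ k) * P := by
        rw [mul_sum, sum_mul]
        exact sum_congr rfl fun k _ => by ring
    _ ≤ L ^ (-(α / 2)) * (∑' k : ℕ, k * r ^ k) * P := by
        gcongr
        exact summable.sum_le_tsum _ fun k _ => by positivity

lemma sub_maxLoad_le_sum [Nonempty ι] {d : ι → ℕ} (hd : ∑ i, d i = n) (L : ℕ) :
    (if L ≤ maxLoad d then (n - maxLoad d : ℝ) else 0) ≤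
      ∑ g, ∑ i ∈ univ.erase g, if L ≤ d g ∧ ∀ j, d j ≤ d g then (d i : ℝ) else 0 := by
  split_ifs with hLd
  · obtain ⟨g, -, hg⟩ := exists_mem_eq_sup univ univ_nonempty d
    have hmax : L ≤ d g ∧ ∀ j, d j ≤ d g := ⟨hg ▸ hLd, fun j => hg ▸ le_sup (mem_univ j)⟩
    calc (n - maxLoad d : ℝ)
        = ∑ i ∈ univ.erase g, if L ≤ d g ∧ ∀ j, d j ≤ d g then (d i : ℝ) else 0 := by
          simp only [if_pos hmax]
          rw [sum_erase_eq_sub (mem_univ g), maxLoad, hg, ← hd, Nat.cast_sum]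
      _ ≤ _ := single_le_sum (f := fun g => ∑ i ∈ univ.erase g,
          if L ≤ d g ∧ ∀ j, d j ≤ d g then (d i : ℝ) else 0) (fun g _ => by positivity) (mem_univ g)
  · positivity

lemma sum_boxMean_strictMax_le_one [Nonempty ι] :
    ∑ g, boxMean ι α n (fun d => if ∀ j, j ≠ g → d j < d g then 1 else 0) ≤ 1 := by
  rw [← map_sum]
  refine (boxMean_mono fun d _ => ?_).trans (boxMean_const 1).le
  rw [Finset.sum_apply, sum_boole]
  norm_cast
  refine card_le_one.2 fun g hg g' hg' => ?_
  simp only [mem_filter, mem_univ, true_and] at hg hg'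
  by_contra hne
  exact (hg g' (Ne.symm hne)).asymm (hg' g hne)

theorem boxMean_sub_maxLoad_le [Nonempty ι] (hα : 0 < α) {L : ℕ} (hL : 0 < L) :
    boxMean ι α n (fun d => if L ≤ maxLoad d then (n - maxLoad d : ℝ) else 0) ≤
      Fintype.card ι * ((L : ℝ) ^ (-(α / 2)) * ∑' k : ℕ, k * ((2 : ℝ) ^ (-(α / 2))) ^ k) := by
  set C := (L : ℝ) ^ (-(α / 2)) * ∑' k : ℕ, k * ((2 : ℝ) ^ (-(α / 2))) ^ k
  have hC : 0 ≤ C := by positivity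
  let P (g : ι) : ℝ := boxMean ι α n fun d => if ∀ j, j ≠ g → d j < d g then 1 else 0
  have hP (g : ι) : 0 ≤ P g := boxMean_nonneg fun d => by positivity
  calc boxMean ι α n (fun d => if L ≤ maxLoad d then (n - maxLoad d : ℝ) else 0)
      ≤ boxMean ι α n (∑ g, ∑ i ∈ univ.erase g,
          fun d => if L ≤ d g ∧ ∀ j, d j ≤ d g then (d i : ℝ) else 0) :=
        boxMean_mono fun d hd => by simpa only [Finset.sum_apply] using sub_maxLoad_le_sum hd L
    _ ≤ ∑ g, ∑ _i ∈ univ.erase g, C * P g := by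
        simp only [map_sum]
        exact sum_le_sum fun g _ => sum_le_sum fun _ hi =>
          boxMean_apply_isMax_le hα hL (ne_of_mem_erase hi).symm
    _ ≤ ∑ g, Fintype.card ι * (C * P g) := by
        refine sum_le_sum fun g _ => ?_
        rw [sum_const, nsmul_eq_mul]
        have := hP g
        gcongr
        exact card_le_univ _
    _ = Fintype.card ι * (C * ∑ g, P g) := by rw [← mul_sum, ← mul_sum]
    _ ≤ Fintype.card ι * C := by
        gcongr
        exact mul_le_of_le_one_right hC sum_boxMean_strictMax_le_one

lemma card_piAntidiag_univ_le (n : ℕ) :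
    #(piAntidiag (univ : Finset ι) n) ≤ 2 ^ (Fintype.card ι + n) := by
  rw [← map_sym_eq_piAntidiag, card_map, sym_univ, card_univ,
    Sym.card_sym_eq_multichoose, Nat.multichoose_eq]
  exact (Nat.choose_le_two_pow _ _).trans (Nat.pow_le_pow_right two_pos (Nat.sub_le _ _))

lemma factorial_rpow_le_sum_factorialWeight [Nonempty ι] (α : ℝ) (n : ℕ) :
    (n ! : ℝ) ^ α ≤ ∑ d ∈ piAntidiag (univ : Finset ι) n, factorialWeight α d := by
  let g : ι := Classical.arbitrary ι
  calc (n ! : ℝ) ^ α = factorialWeight α (Pi.single g n) := by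
        rw [factorialWeight, Fintype.prod_eq_single g fun j hj => by simp [hj]]
        simp
    _ ≤ _ := single_le_sum (fun d _ => (factorialWeight_pos α d).le) (by simp)

theorem boxMean_maxLoad_le [Nonempty ι] (hα : 0 ≤ α) (M : ℕ) :
    boxMean ι α n (fun d => if maxLoad d ≤ M then 1 else 0) ≤
      2 ^ (Fintype.card ι + n) * ((M : ℝ) ^ n / n !) ^ α := by
  rw [boxMean_apply, Real.div_rpow (by positivity) (by positivity), ← mul_div_assoc]
  gcongr
  · calc ∑ d ∈ piAntidiag univ n, factorialWeight α d * (if maxLoad d ≤ M then 1 else 0)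
        ≤ ∑ _d ∈ piAntidiag (univ : Finset ι) n, ((M : ℝ) ^ n) ^ α := by
          refine sum_le_sum fun d hd => ?_
          split_ifs with hM
          · rw [mul_one, ← mem_piAntidiag_univ.1 hd]
            exact factorialWeight_le_of_maxLoad_le hα hM
          · rw [mul_zero]
            positivity
      _ ≤ 2 ^ (Fintype.card ι + n) * ((M : ℝ) ^ n) ^ α := by
          rw [sum_const, nsmul_eq_mul]
          gcongr
          exact_mod_cast card_piAntidiag_univ_le n
  · exact factorial_rpow_le_sum_factorialWeight α n

lemma exists_maxLoad_threshold (hα : 0 < α) :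
    ∃ c > (0 : ℝ), ∀ n M : ℕ, (M : ℝ) ≤ c * n →
      2 ^ (n + 1 + n) * ((M : ℝ) ^ n / n !) ^ α ≤ 2 * (1 / 2) ^ n := by
  refine ⟨(1 / 8) ^ α⁻¹ / Real.exp 1, by positivity, fun n M hM => ?_⟩
  set q : ℝ := (1 / 8) ^ α⁻¹
  have hq : q ^ α = 1 / 8 := Real.rpow_inv_rpow (by norm_num) hα.ne'
  have hle : (M : ℝ) ^ n / n ! ≤ q ^ n :=
    calc (M : ℝ) ^ n / n ! ≤ (q / Real.exp 1 * n) ^ n / n ! := by gcongr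
      _ = (q / Real.exp 1) ^ n * ((n : ℝ) ^ n / n !) := by rw [mul_pow, mul_div_assoc]
      _ ≤ (q / Real.exp 1) ^ n * Real.exp n := by
        gcongr
        exact Real.pow_div_factorial_le_exp _ n.cast_nonneg n
      _ = q ^ n := by
        rw [← Real.exp_one_pow, ← mul_pow, div_mul_cancel₀ _ (Real.exp_pos 1).ne']
  calc 2 ^ (n + 1 + n) * ((M : ℝ) ^ n / n !) ^ α ≤ 2 ^ (n + 1 + n) * (q ^ n) ^ α := by gcongr
    _ = 2 ^ (n + 1 + n) * (1 / 8) ^ n := by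
        rw [← Real.rpow_natCast_mul (by positivity), mul_comm (n : ℝ),
          Real.rpow_mul_natCast (by positivity), hq]
    _ = 2 * (2 * 2 * (1 / 8)) ^ n := by rw [mul_pow, mul_pow]; ring
    _ = 2 * (1 / 2) ^ n := by norm_num

lemma boxMean_sub_maxLoad_div_le (hα : 0 < α) {n : ℕ} (hn : 0 < n) (M : ℕ) :
    boxMean (Fin (n + 1)) α n (fun d => (n - maxLoad d : ℝ) / n) ≤
      2 ^ (n + 1 + n) * ((M : ℝ) ^ n / n !) ^ α +
        2 * (((M + 1 : ℕ) : ℝ) ^ (-(α / 2)) * ∑' k : ℕ, k * ((2 : ℝ) ^ (-(α / 2))) ^ k) := by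
  set S := ∑' k : ℕ, k * ((2 : ℝ) ^ (-(α / 2))) ^ k
  calc boxMean (Fin (n + 1)) α n (fun d => (n - maxLoad d : ℝ) / n)
      ≤ boxMean (Fin (n + 1)) α n ((fun d => if maxLoad d ≤ M then 1 else 0) +
          (n : ℝ)⁻¹ • fun d => if M + 1 ≤ maxLoad d then (n - maxLoad d : ℝ) else 0) := by
        refine boxMean_mono fun d _ => ?_
        simp only [Pi.add_apply, Pi.smul_apply, smul_eq_mul, Nat.succ_le_iff]
        rcases le_or_gt (maxLoad d) M with h | h
        · rw [if_pos h, if_neg h.not_gt, mul_zero, add_zero]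
          exact div_le_one_of_le₀ (by simp) n.cast_nonneg
        · rw [if_neg h.not_ge, if_pos h, zero_add, div_eq_inv_mul]
    _ ≤ 2 ^ (n + 1 + n) * ((M : ℝ) ^ n / n !) ^ α +
          (n : ℝ)⁻¹ * ((n + 1) * (((M + 1 : ℕ) : ℝ) ^ (-(α / 2)) * S)) := by
        rw [map_add, map_smul, smul_eq_mul]
        gcongr
        · simpa using boxMean_maxLoad_le (ι := Fin (n + 1)) (n := n) hα.le M
        · simpa using boxMean_sub_maxLoad_le (ι := Fin (n + 1)) (n := n) hα M.succ_pos
    _ ≤ 2 ^ (n + 1 + n) * ((M : ℝ) ^ n / n !) ^ α +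
          (n : ℝ)⁻¹ * ((n + n) * (((M + 1 : ℕ) : ℝ) ^ (-(α / 2)) * S)) := by
        gcongr
        exact_mod_cast hn
    _ = _ := by field_simp; ring

theorem tendsto_boxMean_sub_maxLoad_div (hα : 0 < α) :
    Tendsto (fun n : ℕ => boxMean (Fin (n + 1)) α n fun d => (n - maxLoad d : ℝ) / n)
      atTop (nhds 0) := by
  obtain ⟨c, hc, hsmall⟩ := exists_maxLoad_threshold hα
  set S := ∑' k : ℕ, k * ((2 : ℝ) ^ (-(α / 2))) ^ k
  have bound (n : ℕ) (hn : 1 ≤ n) :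
      boxMean (Fin (n + 1)) α n (fun d => (n - maxLoad d : ℝ) / n) ≤
        2 * (1 / 2) ^ n + 2 * ((c * n) ^ (-(α / 2)) * S) := by
    set M := ⌊c * n⌋₊
    have hcn : 0 < c * n := by positivity
    have hpow : ((M + 1 : ℕ) : ℝ) ^ (-(α / 2)) ≤ (c * n) ^ (-(α / 2)) :=
      Real.rpow_le_rpow_of_nonpos hcn (by exact_mod_cast (Nat.lt_floor_add_one _).le)
        (by linarith)
    refine (boxMean_sub_maxLoad_div_le hα hn M).trans
      (add_le_add (hsmall n M (Nat.floor_le hcn.le)) ?_)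
    gcongr
  have power : Tendsto (fun n : ℕ => (c * n) ^ (-(α / 2))) atTop (nhds 0) :=
    (tendsto_rpow_neg_atTop (half_pos hα)).comp
      (tendsto_natCast_atTop_atTop.const_mul_atTop hc)
  have geometric : Tendsto (fun n : ℕ => (1 / 2 : ℝ) ^ n) atTop (nhds 0) :=
    tendsto_pow_atTop_nhds_zero_of_lt_one (by norm_num) (by norm_num)
  refine squeeze_zero' (Eventually.of_forall fun n => ?_)
    (eventually_atTop.2 ⟨1, bound⟩) ?_
  · refine (map_zero _).symm.trans_le (boxMean_mono fun d hd => ?_)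
    have hle : (maxLoad d : ℝ) ≤ n := by exact_mod_cast hd ▸ maxLoad_le_sum d
    exact div_nonneg (sub_nonneg.2 hle) n.cast_nonneg
  · simpa using (geometric.const_mul 2).add ((power.mul_const S).const_mul 2)

end Allocations

/-! ### Exchange with the giant box -/

lemma inv_choose_rpow_eq (α : ℝ) (D K : ℕ) :
    (D.choose K : ℝ)⁻¹ ^ α = (K ! : ℝ) ^ α / (D.descFactorial K : ℝ) ^ α := by
  rw [Nat.descFactorial_eq_factorial_mul_choose, Nat.cast_mul,
    Real.mul_rpow (by positivity) (by positivity), Real.inv_rpow (by positivity),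
    div_mul_cancel_left₀ (by positivity)]

lemma div_le_inv_choose_rpow {α : ℝ} {K : ℕ} (hα : K * α = 1) {D : ℕ} (hD : K ≤ D) :
    (K ! : ℝ) ^ α / D ≤ (D.choose K : ℝ)⁻¹ ^ α := by
  have hα₀ : 0 < α := pos_of_mul_pos_right (hα ▸ one_pos) K.cast_nonneg
  have hpos : 0 < D.descFactorial K := Nat.descFactorial_pos.2 hD
  rw [inv_choose_rpow_eq]
  gcongr
  calc (D.descFactorial K : ℝ) ^ α ≤ ((D : ℝ) ^ K) ^ α := by
        gcongr
        exact_mod_cast Nat.descFactorial_le_pow D K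
    _ = D := by rw [← Real.rpow_natCast_mul D.cast_nonneg, hα, Real.rpow_one]

lemma inv_choose_rpow_le_div {α : ℝ} {K : ℕ} (hα : K * α = 1) {D : ℕ} (hD : K ≤ D) :
    (D.choose K : ℝ)⁻¹ ^ α ≤ (K ! : ℝ) ^ α / (D + 1 - K) := by
  have hα₀ : 0 < α := pos_of_mul_pos_right (hα ▸ one_pos) K.cast_nonneg
  have hcast : (D + 1 - K : ℝ) = (D + 1 - K : ℕ) := by
    push_cast [show K ≤ D + 1 by omega]
    rfl
  have hpos : 0 < D + 1 - K := by omega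
  rw [inv_choose_rpow_eq, hcast]
  gcongr
  calc ((D + 1 - K : ℕ) : ℝ) = (((D + 1 - K : ℕ) : ℝ) ^ K) ^ α := by
        rw [← Real.rpow_natCast_mul (Nat.cast_nonneg _), hα, Real.rpow_one]
    _ ≤ (D.descFactorial K : ℝ) ^ α := by
        gcongr
        exact_mod_cast Nat.pow_sub_le_descFactorial D K

section Exchange

variable {ι : Type*} [Fintype ι] {α : ℝ} {n : ℕ}

lemma sum_ite_eq_numBoxes_mul (k : ℕ) (d : ι → ℕ) (c : ℝ) :
    ∑ i, (if d i = k then c else 0) = numBoxes k d * c := by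
  rw [← sum_filter, sum_const, nsmul_eq_mul, numBoxes]

lemma card_lt_two_mul_le_one {d : ι → ℕ} (hd : ∑ i, d i = n) : #{g | n < 2 * d g} ≤ 1 := by
  refine card_le_one.2 fun g hg g' hg' => ?_
  by_contra hne
  have h := add_le_sum (fun _ _ => Nat.zero_le _) (mem_univ g) (mem_univ g') hne (f := d)
  simp only [mem_filter, mem_univ, true_and] at hg hg'
  omega

lemma apply_le_numBoxes_zero {d : ι → ℕ} (hd : ∑ i, d i < Fintype.card ι) (g : ι) :
    d g ≤ numBoxes 0 d := by
  classical
  have hcard : #(univ.erase g) ≤ ∑ j ∈ univ.erase g, ((if d j = 0 then 1 else 0) + d j) := by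
    rw [card_eq_sum_ones]
    exact sum_le_sum fun j _ => by split_ifs <;> omega
  have hzero : ∑ j ∈ univ.erase g, (if d j = 0 then 1 else 0) ≤ numBoxes 0 d := by
    rw [numBoxes, card_filter]
    exact sum_le_sum_of_subset (erase_subset _ _)
  have hsum := add_sum_erase univ d (mem_univ g)
  rw [card_erase_of_mem (mem_univ g), card_univ, sum_add_distrib] at hcard
  omega

/-- The total weight gain of all ways of moving `K` balls to an empty box from a box that keeps
more than half of the `n` balls. -/
noncomputable def moveRate (α : ℝ) (n K : ℕ) (d : ι → ℕ) : ℝ :=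
  ∑ g with n < 2 * (d g - K), numBoxes 0 d * ((d g).choose K : ℝ)⁻¹ ^ α

lemma moveRate_eq {K : ℕ} {d : ι → ℕ} (hd : ∑ i, d i = n) {g : ι} (hg : n < 2 * (d g - K)) :
    moveRate α n K d = numBoxes 0 d * ((d g).choose K : ℝ)⁻¹ ^ α := by
  have hsingle : ({j | n < 2 * (d j - K)} : Finset ι) = {g} := by
    refine eq_singleton_iff_unique_mem.2 ⟨by simpa using hg, fun j hj => ?_⟩
    refine card_le_one.1 (card_lt_two_mul_le_one hd) j ?_ g ?_ <;>
      simp only [mem_filter, mem_univ, true_and] at hj ⊢ <;> omega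
  rw [moveRate, hsingle, sum_singleton]

lemma abs_moveRate_sub_le_of_lt {K : ℕ} (hα : K * α = 1) (hcard : Fintype.card ι = n + 1)
    {d : ι → ℕ} (hd : ∑ i, d i = n) {g : ι} (hg : n < 2 * (d g - K)) :
    |moveRate α n K d - (K ! : ℝ) ^ α| ≤ (K ! : ℝ) ^ α * (2 * (n - d g + K) / n) := by
  set l := (K ! : ℝ) ^ α
  have hgn : d g ≤ n := hd ▸ single_le_sum (fun _ _ => Nat.zero_le _) (mem_univ g)
  have hKg : K ≤ d g := by omega
  have hzero : (d g : ℝ) ≤ numBoxes 0 d := by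
    exact_mod_cast apply_le_numBoxes_zero (by omega) g
  have hzero' : (numBoxes 0 d : ℝ) ≤ n + 1 := by
    exact_mod_cast hcard ▸ card_le_univ _
  have hg₀ : (0 : ℝ) < d g := by exact_mod_cast (show 0 < d g by omega)
  have hn₀ : (0 : ℝ) < n := hg₀.trans_le (by exact_mod_cast hgn)
  have hgK : (n : ℝ) / 2 < d g + 1 - K := by
    have : (n + 2 * K : ℝ) < 2 * d g := by exact_mod_cast (show n + 2 * K < 2 * d g by omega)
    linarith
  have lower : l ≤ moveRate α n K d :=
    calc l = d g * (l / d g) := by field_simp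
      _ ≤ numBoxes 0 d * ((d g).choose K : ℝ)⁻¹ ^ α := by
        gcongr
        exact div_le_inv_choose_rpow hα hKg
      _ = moveRate α n K d := (moveRate_eq hd hg).symm
  rw [abs_of_nonneg (sub_nonneg.2 lower), moveRate_eq hd hg]
  calc numBoxes 0 d * ((d g).choose K : ℝ)⁻¹ ^ α - l
      ≤ (n + 1) * (l / (d g + 1 - K)) - l := by
        gcongr
        exact inv_choose_rpow_le_div hα hKg
    _ = l * (n - d g + K) / (d g + 1 - K) := by
        have : (d g + 1 - K : ℝ) ≠ 0 := by linarith
        field_simp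
        ring
    _ ≤ l * (n - d g + K) / (n / 2) := by
        have : (d g : ℝ) ≤ n := by exact_mod_cast hgn
        have := K.cast_nonneg (α := ℝ)
        gcongr
    _ = l * (2 * (n - d g + K) / n) := by field_simp

lemma abs_moveRate_sub_le {K : ℕ} (hα : K * α = 1) (hcard : Fintype.card ι = n + 1) (hn : 0 < n)
    {d : ι → ℕ} (hd : ∑ i, d i = n) :
    |moveRate α n K d - (K ! : ℝ) ^ α| ≤
      (K ! : ℝ) ^ α * (2 * (n - maxLoad d + K) / n) := by
  have : Nonempty ι := Fintype.card_pos_iff.1 (by omega)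
  obtain ⟨g, -, hg⟩ := exists_mem_eq_sup univ univ_nonempty d
  rw [maxLoad, hg]
  by_cases hlarge : n < 2 * (d g - K)
  · exact abs_moveRate_sub_le_of_lt hα hcard hd hlarge
  have hrate : moveRate α n K d = 0 := by
    rw [moveRate, filter_false_of_mem, sum_empty]
    intro j _
    have hj : d j ≤ d g := hg ▸ le_sup (mem_univ j)
    omega
  rw [hrate, zero_sub, abs_neg, abs_of_nonneg (by positivity)]
  refine le_mul_of_one_le_right (by positivity) ?_
  rw [one_le_div (by positivity)]
  have : (2 * d g : ℝ) ≤ n + 2 * K := by exact_mod_cast (show 2 * d g ≤ n + 2 * K by omega)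
  linarith

lemma abs_card_sub_one_le [Nonempty ι] (hn : 0 < n) {d : ι → ℕ} (hd : ∑ i, d i = n) :
    |(#{g | n < 2 * d g} : ℝ) - 1| ≤ 2 * (n - maxLoad d) / n := by
  obtain ⟨g, -, hg⟩ := exists_mem_eq_sup univ univ_nonempty d
  have hle : (#{g | n < 2 * d g} : ℝ) ≤ 1 := by exact_mod_cast card_lt_two_mul_le_one hd
  rw [abs_sub_comm, abs_of_nonneg (sub_nonneg.2 hle), le_div_iff₀ (by positivity), maxLoad, hg]
  by_cases hlarge : n < 2 * d g
  · have hge : (1 : ℝ) ≤ #{g | n < 2 * d g} := by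
      exact_mod_cast card_pos.2 ⟨g, by simpa using hlarge⟩
    have hgn : (d g : ℝ) ≤ n := by
      exact_mod_cast hd ▸ single_le_sum (fun _ _ => Nat.zero_le _) (mem_univ g)
    nlinarith
  · have : (2 * d g : ℝ) ≤ n := by exact_mod_cast not_lt.1 hlarge
    have : (0 : ℝ) ≤ #{g | n < 2 * d g} := by positivity
    nlinarith

variable [DecidableEq ι]

lemma numBoxes_moveBalls {g i : ι} (hgi : g ≠ i) {K : ℕ} (hK : 0 < K) {d : ι → ℕ} (hi : d i = 0)
    (hg : K < d g - K) : numBoxes K (moveBalls g i K d) = numBoxes K d + 1 := by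
  have h := sum_update_update_add hgi d K (d g - K) fun x => if x = K then 1 else 0
  simp only [hi, hK.ne, hg.ne', show d g ≠ K by omega, if_true, if_false, add_zero] at h
  rw [numBoxes, numBoxes, card_filter, card_filter]
  exact h

theorem boxMean_exchange {K : ℕ} (hK : 0 < K) (hKn : 2 * K ≤ n) (f : ℕ → ℝ) :
    boxMean ι α n (fun d => #{g | n < 2 * d g} * (numBoxes K d * f (numBoxes K d))) =
      boxMean ι α n (fun d => moveRate α n K d * f (numBoxes K d + 1)) := by
  have pair (g i : ι) :
      boxMean ι α n (fun d => if d i = K then if n < 2 * d g then f (numBoxes K d) else 0 else 0) =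
        boxMean ι α n (fun d => if n < 2 * (d g - K) then if d i = 0 then
          ((d g).choose K : ℝ)⁻¹ ^ α * f (numBoxes K d + 1) else 0 else 0) := by
    rcases eq_or_ne g i with rfl | hgi
    · refine boxMean_congr fun d _ => ?_
      grind
    rw [boxMean_apply_eq hgi]
    refine boxMean_congr fun d _ => ?_
    have hself : moveBalls g i K d g = d g - K := by simp [moveBalls]
    rw [hself]
    by_cases hg : d i = 0 ∧ n < 2 * (d g - K)
    · rw [numBoxes_moveBalls hgi hK hg.1 (by omega)]
      grind
    · grind
  calc boxMean ι α n (fun d => #{g | n < 2 * d g} * (numBoxes K d * f (numBoxes K d)))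
      = ∑ g, ∑ i, boxMean ι α n (fun d =>
          if d i = K then if n < 2 * d g then f (numBoxes K d) else 0 else 0) := by
        simp only [← map_sum]
        refine boxMean_congr fun d _ => ?_
        simp only [Finset.sum_apply, sum_ite_eq_numBoxes_mul, mul_ite, mul_zero]
        rw [← sum_filter, sum_const, nsmul_eq_mul]
    _ = boxMean ι α n (fun d => moveRate α n K d * f (numBoxes K d + 1)) := by
        simp only [pair, ← map_sum]
        refine boxMean_congr fun d _ => ?_
        simp only [Finset.sum_apply, moveRate, sum_mul, sum_filter]
        refine sum_congr rfl fun g _ => ?_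
        split_ifs
        · rw [sum_ite_eq_numBoxes_mul, mul_assoc]
        · rw [sum_const_zero, zero_mul]

lemma boxMean_mul_sub_eq {K : ℕ} (hK : 0 < K) (hKn : 2 * K ≤ n) (f : ℕ → ℝ) (c : ℝ) :
    boxMean ι α n (fun d => numBoxes K d * f (numBoxes K d)) -
        c * boxMean ι α n (fun d => f (numBoxes K d + 1)) =
      boxMean ι α n (fun d => (moveRate α n K d - c) * f (numBoxes K d + 1) -
        (#{g | n < 2 * d g} - 1) * (numBoxes K d * f (numBoxes K d))) := by
  set A : (ι → ℕ) → ℝ := fun d => numBoxes K d * f (numBoxes K d)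
  set B : (ι → ℕ) → ℝ := fun d => f (numBoxes K d + 1)
  let N (d : ι → ℕ) : ℝ := #{g | n < 2 * d g}
  let R : (ι → ℕ) → ℝ := moveRate α n K
  have exchange : boxMean ι α n (N * A) = boxMean ι α n (R * B) := boxMean_exchange hK hKn f
  calc boxMean ι α n A - c * boxMean ι α n B
      = boxMean ι α n (R * B) - c * boxMean ι α n B -
          (boxMean ι α n (N * A) - boxMean ι α n A) := by rw [exchange]; ring
    _ = boxMean ι α n (R * B - c • B - (N * A - A)) := by
        simp only [map_sub, map_smul, smul_eq_mul]
    _ = _ := boxMean_congr fun d _ => by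
        simp only [Pi.sub_apply, Pi.mul_apply, Pi.smul_apply, smul_eq_mul, A, B, N, R]
        ring

theorem abs_boxMean_mul_sub_le {K : ℕ} (hK : 0 < K) (hα : K * α = 1)
    (hcard : Fintype.card ι = n + 1) (hKn : 2 * K ≤ n) {f : ℕ → ℝ} {C : ℝ}
    (hf : ∀ x, |f x| ≤ C) (hxf : ∀ x : ℕ, |x * f x| ≤ C) :
    |boxMean ι α n (fun d => numBoxes K d * f (numBoxes K d)) -
        (K ! : ℝ) ^ α * boxMean ι α n (fun d => f (numBoxes K d + 1))| ≤
      2 * C * (1 + (K ! : ℝ) ^ α) *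
        boxMean ι α n (fun d => (n - maxLoad d : ℝ) / n + K / n) := by
  have : Nonempty ι := Fintype.card_pos_iff.1 (by omega)
  have hn : 0 < n := by omega
  set l := (K ! : ℝ) ^ α
  rw [boxMean_mul_sub_eq hK hKn, ← smul_eq_mul _ (boxMean ι α n _), ← map_smul]
  refine (abs_boxMean_le _).trans (boxMean_mono fun d hd => ?_)
  set δ : ℝ := 2 * (n - maxLoad d + K) / n
  have hrate : |moveRate α n K d - l| ≤ l * δ := abs_moveRate_sub_le hα hcard hn hd
  have hgiant : |(#{g | n < 2 * d g} : ℝ) - 1| ≤ δ :=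
    (abs_card_sub_one_le hn hd).trans (by
      simp only [δ]
      gcongr
      exact le_add_of_nonneg_right K.cast_nonneg)
  calc |(moveRate α n K d - l) * f (numBoxes K d + 1) -
        (#{g | n < 2 * d g} - 1) * (numBoxes K d * f (numBoxes K d))|
      ≤ |moveRate α n K d - l| * |f (numBoxes K d + 1)| +
          |(#{g | n < 2 * d g} : ℝ) - 1| * |numBoxes K d * f (numBoxes K d)| := by
        rw [← abs_mul, ← abs_mul]
        exact abs_sub _ _
    _ ≤ l * δ * C + δ * C :=
        add_le_add
          (mul_le_mul hrate (hf _) (abs_nonneg _) ((abs_nonneg _).trans hrate))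
          (mul_le_mul hgiant (hxf _) (abs_nonneg _) ((abs_nonneg _).trans hgiant))
    _ = 2 * C * (1 + l) * ((n - maxLoad d) / n + K / n) := by ring

end Exchange

theorem tendsto_boxMean_mul_sub {K : ℕ} {α : ℝ} (hα : K * α = 1) {f : ℕ → ℝ} {C : ℝ}
    (hf : ∀ x, |f x| ≤ C) (hxf : ∀ x : ℕ, |x * f x| ≤ C) :
    Tendsto (fun n => boxMean (Fin (n + 1)) α n (fun d => numBoxes K d * f (numBoxes K d)) -
        (K ! : ℝ) ^ α * boxMean (Fin (n + 1)) α n (fun d => f (numBoxes K d + 1)))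
      atTop (nhds 0) := by
  have hK : 0 < K := by
    rw [Nat.pos_iff_ne_zero]
    rintro rfl
    simp at hα
  have hα₀ : 0 < α := pos_of_mul_pos_right (hα ▸ one_pos) K.cast_nonneg
  have error : Tendsto (fun n : ℕ => boxMean (Fin (n + 1)) α n
      (fun d => (n - maxLoad d : ℝ) / n + K / n)) atTop (nhds 0) := by
    have h := (tendsto_boxMean_sub_maxLoad_div hα₀).add
      (tendsto_const_div_atTop_nhds_zero_nat (K : ℝ))
    rw [add_zero] at h
    refine h.congr fun n => ?_
    nth_rw 1 [← boxMean_const (ι := Fin (n + 1)) (α := α) (n := n) (K / n : ℝ)]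
    exact (map_add _ _ _).symm
  refine squeeze_zero_norm' ?_ (by simpa using error.const_mul (2 * C * (1 + (K ! : ℝ) ^ α)))
  filter_upwards [eventually_ge_atTop (2 * K)] with n hn
  exact abs_boxMean_mul_sub_le hK hα (Fintype.card_fin _) hn hf hxf

/-! ### Poisson limit -/

section PoissonLimit

variable {ι : Type*} {l : Filter ι} {p : ι → ℕ → ℝ} {c : ℝ}

lemma tendsto_sub_pow_div_factorial_mul
    (hrec : ∀ m : ℕ, Tendsto (fun i => (m + 1) * p i (m + 1) - c * p i m) l (nhds 0)) (m : ℕ) :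
    Tendsto (fun i => p i m - c ^ m / (m ! : ℝ) * p i 0) l (nhds 0) := by
  induction m with
  | zero => simpa using tendsto_const_nhds
  | succ m ih =>
    have h := ((hrec m).add (ih.const_mul c)).div_const (m + 1)
    simp only [mul_zero, add_zero, zero_div] at h
    refine h.congr fun i => ?_
    rw [Nat.factorial_succ]
    push_cast
    field_simp
    ring

theorem tendsto_poisson_of_recurrence (hc : 0 ≤ c)
    (hrec : ∀ m : ℕ, Tendsto (fun i => (m + 1) * p i (m + 1) - c * p i m) l (nhds 0))
    (htight : ∀ ε > 0, ∀ᶠ M in atTop, ∀ᶠ i in l, |∑ m ∈ range M, p i m - 1| ≤ ε) (m : ℕ) :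
    Tendsto (fun i => p i m) l (nhds (Real.exp (-c) * c ^ m / m !)) := by
  let S (M : ℕ) : ℝ := ∑ m ∈ range M, c ^ m / (m ! : ℝ)
  have hS : Tendsto (fun M => (S M)⁻¹) atTop (nhds (Real.exp (-c))) := by
    rw [Real.exp_neg]
    have h := (NormedSpace.expSeries_div_hasSum_exp c).tendsto_sum_nat
    rw [← Real.exp_eq_exp_ℝ] at h
    exact h.inv₀ (Real.exp_pos c).ne'
  have hzero : Tendsto (fun i => p i 0) l (nhds (Real.exp (-c))) := by
    refine Metric.tendsto_nhds.2 fun ε hε => ?_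
    obtain ⟨M, hM₁, hMexp, hMtight⟩ := ((eventually_ge_atTop 1).and
      ((Metric.tendsto_nhds.1 hS (ε / 3) (by positivity)).and
        (htight (ε / 3) (by positivity)))).exists
    have hSM : 1 ≤ S M := by
      have h := sum_le_sum_of_subset_of_nonneg (range_subset_range.2 hM₁)
        fun m _ _ => (by positivity : 0 ≤ c ^ m / (m ! : ℝ))
      simpa using h
    have hsum : Tendsto (fun i => ∑ m ∈ range M, p i m - S M * p i 0) l (nhds 0) := by
      have h := tendsto_finsetSum (range M) fun m _ => tendsto_sub_pow_div_factorial_mul hrec m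
      simpa [S, sum_sub_distrib, sum_mul] using h
    filter_upwards [hMtight, Metric.tendsto_nhds.1 hsum (ε / 3) (by positivity)] with i hi hi'
    rw [Real.dist_eq] at hMexp hi' ⊢
    rw [sub_zero] at hi'
    have hclose : |p i 0 - (S M)⁻¹| ≤ |S M * p i 0 - 1| := by
      rw [show S M * p i 0 - 1 = S M * (p i 0 - (S M)⁻¹) by field_simp, abs_mul]
      exact le_mul_of_one_le_left (abs_nonneg _) (hSM.trans (le_abs_self _))
    grind
  have h := (tendsto_sub_pow_div_factorial_mul hrec m).add (hzero.const_mul (c ^ m / (m ! : ℝ)))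
  rw [zero_add] at h
  convert h using 2 <;> ring

end PoissonLimit

/-- The probability that exactly `m` of `n + 1` boxes contain exactly `K` of the `n` balls. -/
noncomputable def numBoxesProb (α : ℝ) (K n m : ℕ) : ℝ :=
  boxMean (Fin (n + 1)) α n fun d => if numBoxes K d = m then 1 else 0

lemma tendsto_numBoxesProb_succ_sub {K : ℕ} {α : ℝ} (hα : K * α = 1) (m : ℕ) :
    Tendsto (fun n => (m + 1) * numBoxesProb α K n (m + 1) - (K ! : ℝ) ^ α * numBoxesProb α K n m)
      atTop (nhds 0) := by
  let f (x : ℕ) : ℝ := if x = m + 1 then 1 else 0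
  have hf (x : ℕ) : |f x| ≤ 1 := by
    simp only [f]
    split_ifs <;> simp
  have hxf (x : ℕ) : x * f x = (m + 1) * f x := by
    simp only [f]
    split_ifs with h <;> simp [h]
  have hxf_le (x : ℕ) : |x * f x| ≤ m + 1 := by
    rw [hxf, abs_mul, abs_of_nonneg (by positivity)]
    exact mul_le_of_le_one_right (by positivity) (hf x)
  have h := tendsto_boxMean_mul_sub hα (fun x => (hf x).trans (by simp)) hxf_le
  refine h.congr fun n => ?_
  simp only [hxf, f, Nat.add_right_cancel_iff, numBoxesProb]
  rw [← smul_eq_mul (m + 1 : ℝ) (boxMean _ _ _ _), ← map_smul]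
  rfl

lemma sum_numBoxesProb_add_tail (α : ℝ) (K n M : ℕ) :
    ∑ m ∈ range M, numBoxesProb α K n m +
      boxMean (Fin (n + 1)) α n (fun d => if M ≤ numBoxes K d then 1 else 0) = 1 := by
  simp only [numBoxesProb]
  rw [← map_sum, ← map_add]
  refine (boxMean_congr fun d _ => ?_).trans (boxMean_const 1)
  simp only [Pi.add_apply, Finset.sum_apply, sum_ite_eq, mem_range]
  grind

lemma eventually_abs_sum_numBoxesProb_sub_one_le {K : ℕ} {α : ℝ} (hα : K * α = 1) {ε : ℝ}
    (hε : 0 < ε) :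
    ∀ᶠ M in atTop, ∀ᶠ n in atTop, |∑ m ∈ range M, numBoxesProb α K n m - 1| ≤ ε := by
  set c := (K ! : ℝ) ^ α
  filter_upwards [eventually_ge_atTop 1,
    (tendsto_const_div_atTop_nhds_zero_nat c).eventually_le_const (half_pos hε)] with M hM hcM
  -- For this `f`, the exchange identity bounds `P(X ≥ M)` by `c E[f(X + 1)] + o(1) ≤ c / M + o(1)`.
  let f (x : ℕ) : ℝ := if M ≤ x then (x : ℝ)⁻¹ else 0
  have hf₀ (x : ℕ) : 0 ≤ f x := by positivity
  have hf (x : ℕ) : f x ≤ (M : ℝ)⁻¹ := by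
    simp only [f]
    split_ifs with h
    · gcongr
    · positivity
  have hxf (x : ℕ) : x * f x = if M ≤ x then 1 else 0 := by
    simp only [f]
    split_ifs with h
    · exact mul_inv_cancel₀ (Nat.cast_ne_zero.2 (by omega))
    · rw [mul_zero]
  have hf_le (x : ℕ) : |f x| ≤ 1 := by
    rw [abs_of_nonneg (hf₀ x)]
    exact (hf x).trans (inv_le_one_of_one_le₀ (by exact_mod_cast hM))
  have hxf_le (x : ℕ) : |x * f x| ≤ 1 := by
    rw [hxf]
    split_ifs <;> simp
  filter_upwards [(tendsto_boxMean_mul_sub hα hf_le hxf_le).eventually_le_const (half_pos hε)]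
    with n hn
  set tail := boxMean (Fin (n + 1)) α n fun d => if M ≤ numBoxes K d then 1 else 0
  have htail : ∑ m ∈ range M, numBoxesProb α K n m - 1 = -tail :=
    sub_eq_of_eq_add' (eq_add_neg_of_add_eq (sum_numBoxesProb_add_tail α K n M))
  have htail₀ : 0 ≤ tail := boxMean_nonneg fun d => by positivity
  have hmean : boxMean (Fin (n + 1)) α n (fun d => f (numBoxes K d + 1)) ≤ (M : ℝ)⁻¹ :=
    (boxMean_mono fun d _ => hf _).trans_eq (boxMean_const _)
  rw [htail, abs_neg, abs_of_nonneg htail₀]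
  simp only [hxf] at hn
  calc tail ≤ c * boxMean (Fin (n + 1)) α n (fun d => f (numBoxes K d + 1)) + ε / 2 := by
        linarith
    _ ≤ c * (M : ℝ)⁻¹ + ε / 2 := by gcongr
    _ ≤ ε := by
        rw [← div_eq_mul_inv]
        linarith

lemma nu_countOutdeg_succ (α : ℝ) (K n m : ℕ) :
    nu (fun k => ((k - 1).factorial : ℝ) ^ α) (n + 1) (fun t => t.countOutdeg K = m) =
      numBoxesProb α K n m := by
  have h := nu_outdegs (fun k => ((k - 1).factorial : ℝ) ^ α) n fun M => M.count K = m
  have count_map (d : Fin (n + 1) → ℕ) : (univ.val.map d).count K = numBoxes K d := by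
    rw [Multiset.count_map, numBoxes, card_def]
    simp only [filter_val, eq_comm]
  simp only [PTree.count_outdegs, count_map, Nat.add_sub_cancel] at h
  rw [h, numBoxesProb, boxMean_apply]
  simp only [mul_ite, mul_one, mul_zero]
  rfl

theorem stmt_15_general (K : ℕ) (α : ℝ) (hα : (K : ℝ) * α = 1) (m : ℕ) :
    Tendsto (fun N : ℕ =>
        nu (fun n => ((n - 1).factorial : ℝ) ^ α) N (fun t => t.countOutdeg K = m))
      atTop (nhds (Real.exp (-((K.factorial : ℝ) ^ α)) * ((K.factorial : ℝ) ^ α) ^ m /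
        m.factorial)) := by
  rw [← tendsto_add_atTop_iff_nat 1]
  simp only [nu_countOutdeg_succ]
  exact tendsto_poisson_of_recurrence (by positivity) (tendsto_numBoxesProb_succ_sub hα)
    (fun _ => eventually_abs_sum_numBoxesProb_sub_one_le hα) m

/-- Theorem 3 (iv), case `i = K = 1/α` an integer: `X_{K+1,N} →d Poisson((K!)^α)`. -/
theorem stmt_15 (K : ℕ) (hK : 2 ≤ K) (α : ℝ) (hα : α = 1 / (K : ℝ)) :
    ∀ m : ℕ, Tendsto (fun N : ℕ =>
        nu (fun n => ((n - 1).factorial : ℝ) ^ α) N (fun t => t.countOutdeg K = m))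
      atTop (nhds (Real.exp (-((K.factorial : ℝ) ^ α)) * ((K.factorial : ℝ) ^ α) ^ m /
        m.factorial)) := by
  refine stmt_15_general K α ?_
  rw [hα, mul_one_div_cancel (by positivity)]
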